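/- Let K be a number field, let Σ be a finite set of nonzero prime ideals of its ring of integers 𝓞_K, let Γ be a finitely generated group, and let ρ : Γ → GL_n(K) be a group homomorphism such that for every nonzero prime ideal p of 𝓞_K with p ∉ Σ and every γ ∈ Γ, all entries of ρ(γ) and of ρ(γ)⁻¹ lie in the localization of 𝓞_K at p. Assume that for each p ∈ Σ there exists an element g of GL_n over an algebraic closure of the p-adic completion K_p such that for every γ ∈ Γ all entries of g·ρ(γ)·g⁻¹ are integral over the valuation ring 𝓞_{K_p} of K_p. Then there exist a finite extension of number fields L/K and an element g ∈ GL_n(L) such that for every γ ∈ Γ, all entries of g·ρ(γ)·g⁻¹ and of its inverse lie in 𝓞_L. -/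

import Mathlib

open Matrix NumberField IsDedekindDomain

lemma aux_principal {A F : Type*} [CommRing A] [IsDomain A] [IsBezout A] [Field F] [Algebra A F]
    [IsFractionRing A F] (P : Submodule A F) (hP : P.FG) : ∃ b : F, P = Submodule.span A {b} := by
  induction P, hP using Submodule.fg_induction with
  | singleton x => exact ⟨x, rfl⟩
  | sup M N hM hN ihM ihN =>
    obtain ⟨x, rfl⟩ := ihM
    obtain ⟨y, rfl⟩ := ihN
    obtain ⟨d, hd⟩ := IsLocalization.exist_integer_multiples (nonZeroDivisors A)
      (Finset.univ : Finset (Fin 2)) ![x, y]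
    obtain ⟨a, ha⟩ := hd 0 (Finset.mem_univ _)
    obtain ⟨b, hb⟩ := hd 1 (Finset.mem_univ _)
    simp only [Matrix.cons_val_zero, Matrix.cons_val_one, Algebra.smul_def] at ha hb
    have hd0 : algebraMap A F d ≠ 0 := by simp
    obtain ⟨c, hc⟩ := IsBezout.span_pair_isPrincipal a b
    rw [Ideal.submodule_span_eq] at hc
    refine ⟨algebraMap A F c / algebraMap A F d, ?_⟩
    have h1 : a ∈ Ideal.span {c} := hc ▸ Ideal.subset_span (by simp)
    have h2 : b ∈ Ideal.span {c} := hc ▸ Ideal.subset_span (by simp)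
    have h3 : c ∈ Ideal.span {a, b} := hc ▸ Ideal.mem_span_singleton_self c
    rw [Ideal.mem_span_singleton'] at h1 h2
    rw [Ideal.mem_span_pair] at h3
    obtain ⟨r, hr⟩ := h1
    obtain ⟨s, hs⟩ := h2
    obtain ⟨p, q, hpq⟩ := h3
    rw [← Submodule.span_union]
    apply le_antisymm
    · rw [Submodule.span_le]
      rintro z (rfl | rfl)
      · refine Submodule.mem_span_singleton.2 ⟨r, ?_⟩
        rw [Algebra.smul_def, ← mul_div_assoc, ← map_mul, hr, ha, mul_div_cancel_left₀ _ hd0]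
      · refine Submodule.mem_span_singleton.2 ⟨s, ?_⟩
        rw [Algebra.smul_def, ← mul_div_assoc, ← map_mul, hs, hb, mul_div_cancel_left₀ _ hd0]
    · rw [Submodule.span_singleton_le_iff_mem]
      have : algebraMap A F c / algebraMap A F d = p • x + q • y := by
        rw [div_eq_iff hd0, ← hpq, map_add, map_mul, map_mul, ha, hb, Algebra.smul_def,
          Algebra.smul_def]
        ring
      rw [this]
      exact add_mem (Submodule.smul_mem _ _ (Submodule.subset_span (by simp)))
        (Submodule.smul_mem _ _ (Submodule.subset_span (by simp)))

lemma aux_free_span {A F : Type*} [CommRing A] [IsDomain A] [Field F] [Algebra A F]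
    [IsFractionRing A F] (b : F) : Module.Free A (Submodule.span A {b}) := by
  by_cases hb : b = 0
  · subst hb
    rw [Submodule.span_zero_singleton]
    infer_instance
  · have : Module.IsTorsionFree A F := inferInstance
    exact Module.Free.of_equiv (LinearEquiv.toSpanNonzeroSingleton A F b hb)

lemma aux_free {A F : Type*} [CommRing A] [IsDomain A] [IsBezout A] [Field F] [Algebra A F]
    [IsFractionRing A F] (n : ℕ) (N : Submodule A (Fin n → F)) (hN : N.FG) : Module.Free A N := by
  induction n with
  | zero => infer_instance
  | succ n ih =>
    let p : N →ₗ[A] F := (LinearMap.proj (0 : Fin (n+1))).comp N.subtype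
    have : Module.Finite A N := Module.Finite.iff_fg.2 hN
    have hpfg : (LinearMap.range p).FG := Module.Finite.iff_fg.1 inferInstance
    have : Module.Free A (LinearMap.range p) := by
      obtain ⟨b, hb⟩ := aux_principal _ hpfg
      rw [hb]
      exact aux_free_span b
    obtain ⟨s, hs⟩ := Module.projective_lifting_property p.rangeRestrict LinearMap.id
      p.surjective_rangeRestrict
    have hs' : ∀ x, p.rangeRestrict (s x) = x := fun x => LinearMap.congr_fun hs x
    have hs2 : ∀ x, p (s x) = x := fun x => congrArg Subtype.val (hs' x)
    have hker : LinearMap.range (LinearMap.id - s.comp p.rangeRestrict) = LinearMap.ker p := by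
      ext x
      constructor
      · rintro ⟨y, rfl⟩
        simp [hs2]
      · intro hx
        refine ⟨x, ?_⟩
        have : p.rangeRestrict x = 0 := Subtype.ext hx
        simp [this]
    have hkfin : Module.Finite A (LinearMap.ker p) := by
      rw [← hker]; infer_instance
    let t : LinearMap.ker p →ₗ[A] (Fin n → F) :=
      (LinearMap.funLeft A F Fin.succ).comp (N.subtype.comp (LinearMap.ker p).subtype)
    have ht : Function.Injective t := by
      rintro ⟨⟨x, hx⟩, hx0⟩ ⟨⟨y, hy⟩, hy0⟩ h
      have h0 : x 0 = 0 := hx0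
      have h0' : y 0 = 0 := hy0
      have h1 : ∀ i : Fin n, x i.succ = y i.succ := fun i => congrFun h i
      apply Subtype.ext
      apply Subtype.ext
      funext i
      refine Fin.cases ?_ ?_ i
      · exact h0.trans h0'.symm
      · exact h1
    have : Module.Free A (LinearMap.range t) := ih _ (Module.Finite.iff_fg.1 inferInstance)
    have : Module.Free A (LinearMap.ker p) := Module.Free.of_equiv (LinearEquiv.ofInjective t ht).symm
    refine Module.Free.of_equiv (LinearEquiv.ofBijective
      (LinearMap.coprod (LinearMap.ker p).subtype s) ⟨?_, ?_⟩)
    · refine (injective_iff_map_eq_zero _).2 ?_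
      rintro ⟨⟨x, hx⟩, y⟩ h
      simp only [LinearMap.coprod_apply, Submodule.subtype_apply] at h
      have hy : y = 0 := by
        have := congrArg p h
        rw [map_add, hs2, LinearMap.mem_ker.1 hx] at this
        ext; simpa using this
      subst hy
      have : x = 0 := by simpa using h
      subst this
      rfl
    · intro x
      refine ⟨⟨⟨x - s (p.rangeRestrict x), ?_⟩, p.rangeRestrict x⟩, ?_⟩
      · simp [hs2]
      · simp

lemma aux_bezout {Ω : Type*} [Field Ω] [CharZero Ω] [IsAlgClosed Ω] [Algebra.IsAlgebraic ℚ Ω] :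
    IsBezout (integralClosure ℤ Ω) := by
  rw [IsBezout.iff_span_pair_isPrincipal]
  intro x y
  by_cases hxy : x = 0 ∧ y = 0
  · obtain ⟨rfl, rfl⟩ := hxy
    exact ⟨0, by simp⟩
  let E := IntermediateField.adjoin ℚ ({(x : Ω), (y : Ω)} : Set Ω)
  have : FiniteDimensional ℚ E := IntermediateField.finiteDimensional_adjoin
    (fun z _ => (Algebra.IsAlgebraic.isAlgebraic z).isIntegral)
  have : NumberField E := ⟨⟩
  have hxE : (x : Ω) ∈ E := IntermediateField.subset_adjoin _ _ (by simp)
  have hyE : (y : Ω) ∈ E := IntermediateField.subset_adjoin _ _ (by simp)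
  let φ : 𝓞 E →+* integralClosure ℤ Ω :=
    RingHom.codRestrict ((algebraMap E Ω).comp (algebraMap (𝓞 E) E)) (integralClosure ℤ Ω) (by
      intro z
      exact (RingOfIntegers.isIntegral_coe z).map (algebraMap E Ω).toIntAlgHom)
  have hφ : Function.Injective φ := by
    intro a b hab
    have := congrArg Subtype.val hab
    exact RingOfIntegers.ext ((algebraMap E Ω).injective this)
  obtain ⟨x', hx'⟩ : ∃ x', φ x' = x := ⟨⟨⟨x, hxE⟩, by
    rw [mem_integralClosure_iff]
    exact (isIntegral_algebraMap_iff (algebraMap E Ω).injective).1 x.2⟩, rfl⟩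
  obtain ⟨y', hy'⟩ : ∃ x', φ x' = y := ⟨⟨⟨y, hyE⟩, by
    rw [mem_integralClosure_iff]
    exact (isIntegral_algebraMap_iff (algebraMap E Ω).injective).1 y.2⟩, rfl⟩
  rw [← hx', ← hy'] at hxy ⊢
  let I : Ideal (𝓞 E) := Ideal.span {x', y'}
  have hI : I ≠ 0 := by
    intro h
    apply hxy
    have h1 : I = ⊥ := h
    rw [Ideal.span_eq_bot] at h1
    simp [h1 x' (by simp), h1 y' (by simp)]
  let h := Fintype.card (ClassGroup (𝓞 E))
  have hh : h ≠ 0 := Fintype.card_ne_zero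
  have hIp : (I ^ h).IsPrincipal := by
    rw [← ClassGroup.mk0_eq_one_iff (pow_mem (mem_nonZeroDivisors_of_ne_zero hI) h)]
    have := pow_card_eq_one (x := ClassGroup.mk0 ⟨I, mem_nonZeroDivisors_of_ne_zero hI⟩)
    rw [← map_pow] at this
    exact this
  obtain ⟨a, ha⟩ := hIp
  rw [Ideal.submodule_span_eq] at ha
  obtain ⟨b, hb⟩ := IsAlgClosed.exists_pow_nat_eq (φ a : Ω) (Nat.pos_of_ne_zero hh)
  have hbi : IsIntegral ℤ b := by
    apply IsIntegral.of_pow (Nat.pos_of_ne_zero hh)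
    rw [hb]; exact (φ a).2
  obtain ⟨b, rfl⟩ : ∃ b' : integralClosure ℤ Ω, b = b' := ⟨⟨b, hbi⟩, rfl⟩
  have hb : b ^ h = φ a := Subtype.ext (by simpa using hb)
  have ha0 : a ≠ 0 := by
    rintro rfl
    apply pow_ne_zero h hI
    simpa using ha
  have hb0 : b ^ h ≠ 0 := by rw [hb]; simpa using hφ.ne ha0
  have hdvd : ∀ z ∈ I, b ∣ φ z := by
    intro z hz
    have h1 : z ^ h ∈ Ideal.span {a} := ha ▸ Ideal.pow_mem_pow hz h
    rw [Ideal.mem_span_singleton] at h1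
    obtain ⟨c, hc⟩ := h1
    have hbΩ : (b : Ω) ≠ 0 := by
      intro h0
      apply hb0
      rw [show b = 0 from Subtype.ext h0, zero_pow hh]
    have hq : ((φ z : Ω) / b) ^ h = φ c := by
      rw [div_pow, div_eq_iff (pow_ne_zero h hbΩ)]
      have h2 : φ z ^ h = φ c * b ^ h := by
        rw [hb, ← map_pow, hc, map_mul, mul_comm]
      simpa using congrArg Subtype.val h2
    have hqi : IsIntegral ℤ ((φ z : Ω) / b) := by
      apply IsIntegral.of_pow (Nat.pos_of_ne_zero hh)
      rw [hq]; exact (φ c).2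
    refine ⟨⟨_, hqi⟩, Subtype.ext ?_⟩
    simp only [MulMemClass.coe_mul]
    rw [mul_div_cancel₀ _ hbΩ]
  obtain ⟨u, hu⟩ := hdvd x' (Ideal.subset_span (by simp))
  obtain ⟨w, hw⟩ := hdvd y' (Ideal.subset_span (by simp))
  have key : Ideal.span {φ x', φ y'} = Ideal.span {b} * Ideal.span {u, w} := by
    rw [hu, hw, Ideal.span_mul_span]
    congr 1
    simp [Set.image_pair]
  have hmap : Ideal.span {φ x', φ y'} = I.map φ := by
    rw [Ideal.map_span, Set.image_pair]
  have hpow : (Ideal.span {u, w}) ^ h = ⊤ := by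
    have h1 : (Ideal.span {φ x', φ y'}) ^ h = Ideal.span {b ^ h} := by
      rw [hmap, ← Ideal.map_pow, ha, Ideal.map_span, hb]; simp
    rw [key, mul_pow, Ideal.span_singleton_pow] at h1
    rw [Ideal.eq_top_iff_one]
    have h2 : b ^ h * 1 ∈ Ideal.span {b ^ h} * Ideal.span {u, w} ^ h := by
      rw [h1, mul_one]; exact Ideal.mem_span_singleton_self _
    rw [Ideal.mem_span_singleton_mul] at h2
    obtain ⟨z, hz, hz'⟩ := h2
    rwa [mul_left_cancel₀ hb0 hz'] at hz
  have htop : Ideal.span {u, w} = ⊤ := by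
    rw [Ideal.eq_top_iff_one]
    apply Ideal.pow_le_self hh
    rw [hpow]; trivial
  refine ⟨b, ?_⟩
  rw [key, htop, Ideal.mul_top]


lemma aux_local {O F E : Type*} [CommRing O] [IsDomain O] [IsIntegrallyClosed O] [Field F] [Field E]
    [Algebra O F] [IsFractionRing O F] [Algebra F E] [Algebra O E] [IsScalarTower O F E]
    [Algebra.IsAlgebraic F E] {n : ℕ} (g : GL (Fin n) E) :
    ∃ c : O, c ≠ 0 ∧ ∀ M : Matrix (Fin n) (Fin n) F,
      (∀ i j, IsIntegral O (((g : Matrix (Fin n) (Fin n) E) * M.map (algebraMap F E) *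
        ((g⁻¹ : GL (Fin n) E) : Matrix (Fin n) (Fin n) E)) i j)) →
      ∀ i j, ∃ z : O, algebraMap O F z = algebraMap O F c * M i j := by
  classical
  have : Algebra.IsAlgebraic O E := (IsFractionRing.comap_isAlgebraic_iff (K := F)).2 inferInstance
  obtain ⟨d, hd, hdi⟩ := Algebra.IsAlgebraic.exists_integral_multiples O
    ((Finset.univ.image fun p : Fin n × Fin n => (g : Matrix (Fin n) (Fin n) E) p.1 p.2) ∪
     (Finset.univ.image fun p : Fin n × Fin n => ((g⁻¹ : GL (Fin n) E) : Matrix (Fin n) (Fin n) E) p.1 p.2))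
  have hg : ∀ i j, IsIntegral O (d • (g : Matrix (Fin n) (Fin n) E) i j) := fun i j =>
    hdi _ (Finset.mem_union_left _ (Finset.mem_image.2 ⟨(i, j), by simp⟩))
  have hg' : ∀ i j, IsIntegral O (d • ((g⁻¹ : GL (Fin n) E) : Matrix (Fin n) (Fin n) E) i j) := fun i j =>
    hdi _ (Finset.mem_union_right _ (Finset.mem_image.2 ⟨(i, j), by simp⟩))
  refine ⟨d * d, mul_ne_zero hd hd, fun M hM i j => ?_⟩
  set X := (g : Matrix (Fin n) (Fin n) E) * M.map (algebraMap F E) * ((g⁻¹ : GL (Fin n) E) : Matrix (Fin n) (Fin n) E)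
    with hX
  have hMX : M.map (algebraMap F E) = ((g⁻¹ : GL (Fin n) E) : Matrix (Fin n) (Fin n) E) * X * (g : Matrix (Fin n) (Fin n) E) := by
    rw [hX]
    simp only [← Matrix.mul_assoc]
    rw [← Units.val_mul, inv_mul_cancel, Units.val_one, Matrix.one_mul, Matrix.mul_assoc,
      ← Units.val_mul, inv_mul_cancel, Units.val_one, Matrix.mul_one]
  have hint : IsIntegral O (algebraMap F E (algebraMap O F (d * d) * M i j)) := by
    have : algebraMap F E (algebraMap O F (d * d) * M i j) =
        ((d • ((g⁻¹ : GL (Fin n) E) : Matrix (Fin n) (Fin n) E)) * X * (d • (g : Matrix (Fin n) (Fin n) E))) i j := by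
      rw [Matrix.smul_mul, Matrix.smul_mul, Matrix.mul_smul, smul_smul, ← hMX, map_mul,
        ← IsScalarTower.algebraMap_apply, Matrix.smul_apply, Algebra.smul_def]
      rfl
    rw [this, Matrix.mul_apply]
    refine IsIntegral.sum _ fun k _ => IsIntegral.mul ?_ (hg k j)
    rw [Matrix.mul_apply]
    exact IsIntegral.sum _ fun l _ => IsIntegral.mul (hg' i l) (hM l k)
  rw [isIntegral_algebraMap_iff (algebraMap F E).injective] at hint
  exact IsIntegrallyClosed.isIntegral_iff.1 hint

lemma aux_place (K : Type) [Field K] [NumberField K] (n : ℕ) (v : HeightOneSpectrum (𝓞 K))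
    (Γ : Type) [Group Γ] (ρ : Γ →* GL (Fin n) K)
    (h : ∃ g : GL (Fin n) (AlgebraicClosure (v.adicCompletion K)),
        ∀ (γ : Γ) (i j : Fin n),
          ∃ P : Polynomial (v.adicCompletion K), P.Monic ∧
            (∀ k : ℕ, P.coeff k ∈ v.adicCompletionIntegers K) ∧
            Polynomial.aeval
              (((g * Units.map (RingHom.mapMatrix
                    (algebraMap K (AlgebraicClosure (v.adicCompletion K)))).toMonoidHom
                      (ρ γ) * g⁻¹ :
                  GL (Fin n) (AlgebraicClosure (v.adicCompletion K))) :
                Matrix (Fin n) (Fin n) (AlgebraicClosure (v.adicCompletion K))) i j)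
              P = 0) :
    ∃ d : 𝓞 K, d ≠ 0 ∧ ∀ (γ : Γ) (i j : Fin n),
      v.valuation K (algebraMap (𝓞 K) K d * (ρ γ : Matrix (Fin n) (Fin n) K) i j) ≤ 1 := by
  obtain ⟨g, hg⟩ := h
  obtain ⟨c, hc, H⟩ := aux_local (O := v.adicCompletionIntegers K) (F := v.adicCompletion K) g
  have hc0 : (c : v.adicCompletion K) ≠ 0 := by simpa using hc
  obtain ⟨b, hb, hb'⟩ := HeightOneSpectrum.adicCompletion.mul_nonZeroDivisor_mem_adicCompletionIntegers v
    (c : v.adicCompletion K)⁻¹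
  refine ⟨b, nonZeroDivisors.ne_zero hb, fun γ i j => ?_⟩
  obtain ⟨z, hz⟩ := H ((ρ γ : Matrix (Fin n) (Fin n) K).map (algebraMap K (v.adicCompletion K))) (by
    intro i j
    obtain ⟨P, hP, hP1, hP2⟩ := hg γ i j
    have hl : P ∈ Polynomial.lifts (algebraMap (v.adicCompletionIntegers K) (v.adicCompletion K)) := by
      rw [Polynomial.lifts_iff_coeff_lifts]
      exact fun k => ⟨⟨_, hP1 k⟩, rfl⟩
    obtain ⟨Q, hQ, -, hQm⟩ := Polynomial.lifts_and_natDegree_eq_and_monic hl hP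
    refine ⟨Q, hQm, ?_⟩
    rw [← Polynomial.aeval_def, ← Polynomial.aeval_map_algebraMap (v.adicCompletion K), hQ]
    exact hP2) i j
  rw [← HeightOneSpectrum.valuedAdicCompletion_eq_valuation']
  have e : algebraMap K (v.adicCompletion K)
      (algebraMap (𝓞 K) K b * (ρ γ : Matrix (Fin n) (Fin n) K) i j) =
      ((c : v.adicCompletion K)⁻¹ * algebraMap (𝓞 K) (v.adicCompletion K) b) * (z : v.adicCompletion K) := by
    have : (z : v.adicCompletion K) = c * algebraMap K (v.adicCompletion K) ((ρ γ : Matrix (Fin n) (Fin n) K) i j) := hz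
    rw [this, map_mul, ← IsScalarTower.algebraMap_apply]
    field_simp
  have hm : Valued.v (((c : v.adicCompletion K)⁻¹ *
      algebraMap (𝓞 K) (v.adicCompletion K) b) * (z : v.adicCompletion K)) ≤ 1 := mul_mem hb' z.2
  exact (congrArg Valued.v e).trans_le hm

lemma aux_global (K : Type) [Field K] [NumberField K] (n : ℕ)
    (S : Finset (HeightOneSpectrum (𝓞 K)))
    (Γ : Type) [Group Γ] (ρ : Γ →* GL (Fin n) K)
    (hloc : ∀ v : HeightOneSpectrum (𝓞 K), v ∉ S → ∀ (γ : Γ) (i j : Fin n),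
      (∃ a b : 𝓞 K, b ∉ v.asIdeal ∧
        (ρ γ : Matrix (Fin n) (Fin n) K) i j =
          algebraMap (𝓞 K) K a / algebraMap (𝓞 K) K b))
    (hS : ∀ v ∈ S, ∃ d : 𝓞 K, d ≠ 0 ∧ ∀ (γ : Γ) (i j : Fin n),
      v.valuation K (algebraMap (𝓞 K) K d * (ρ γ : Matrix (Fin n) (Fin n) K) i j) ≤ 1) :
    ∃ D : 𝓞 K, D ≠ 0 ∧ ∀ (γ : Γ) (i j : Fin n), ∃ z : 𝓞 K,
      algebraMap (𝓞 K) K z = algebraMap (𝓞 K) K D * (ρ γ : Matrix (Fin n) (Fin n) K) i j := by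
  classical
  choose! d hd0 hd using hS
  refine ⟨∏ v ∈ S, d v, Finset.prod_ne_zero_iff.2 hd0, fun γ i j => ?_⟩
  refine HeightOneSpectrum.mem_integers_of_valuation_le_one K _ fun v => ?_
  by_cases hv : v ∈ S
  · rw [← Finset.prod_erase_mul _ _ hv, map_mul (algebraMap (𝓞 K) K), mul_assoc, map_mul]
    exact mul_le_one' (HeightOneSpectrum.valuation_le_one v _) (hd v hv γ i j)
  · rw [map_mul]
    refine mul_le_one' (HeightOneSpectrum.valuation_le_one v _) ?_
    obtain ⟨a, b, hb, e⟩ := hloc v hv γ i j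
    rw [e, map_div₀]
    have : v.valuation K (algebraMap (𝓞 K) K b) = 1 := by
      refine le_antisymm (HeightOneSpectrum.valuation_le_one v _) (not_lt.1 fun h => hb ?_)
      exact (HeightOneSpectrum.valuation_lt_one_iff_mem v b).1 h
    rw [this, div_one]
    exact HeightOneSpectrum.valuation_le_one v _

/-- A finitely generated stable full lattice over the algebraic integers gives a conjugation. -/
lemma aux_conj {A F : Type*} [CommRing A] [IsDomain A] [IsBezout A] [Field F] [Algebra A F]
    [IsFractionRing A F] (n : ℕ) (N : Submodule A (Fin n → F)) (hN : N.FG)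
    (hspan : Submodule.span F (N : Set (Fin n → F)) = ⊤) :
    ∃ P : Matrix (Fin n) (Fin n) F, P.det ≠ 0 ∧ ∀ R : Matrix (Fin n) (Fin n) F,
      (∀ x ∈ N, R *ᵥ x ∈ N) → ∃ Q : Matrix (Fin n) (Fin n) A, R * P = P * Q.map (algebraMap A F) := by
  have hfree := aux_free n N hN
  have hlat : Submodule.IsLattice F N := ⟨hN, hspan⟩
  let b0 := Module.Free.chooseBasis A N
  let B0 := b0.extendOfIsLattice F
  have : Finite (Module.Free.ChooseBasisIndex A N) := Module.Finite.finite_basis B0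
  have : Fintype (Module.Free.ChooseBasisIndex A N) := Fintype.ofFinite _
  have hcard : Fintype.card (Module.Free.ChooseBasisIndex A N) = n := by
    rw [← Module.finrank_eq_card_basis B0]; simp
  let e := Fintype.equivFinOfCardEq hcard
  let b := b0.reindex e
  let B := B0.reindex e
  have hB : ∀ i, B i = (b i : Fin n → F) := by
    intro i; simp [B, b, B0]
  refine ⟨Matrix.of fun i j => B j i, ?_, fun R hR => ?_⟩
  · have h := (Pi.basisFun F (Fin n)).isUnit_det B
    rw [Module.Basis.det_apply] at h
    have h2 : (Pi.basisFun F (Fin n)).toMatrix B = Matrix.of fun i j => B j i := by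
      ext i j; simp [Module.Basis.toMatrix_apply]
    rw [h2] at h
    exact h.ne_zero
  · refine ⟨Matrix.of fun i j => b.repr ⟨R *ᵥ (b j : Fin n → F), hR _ (b j).2⟩ i, ?_⟩
    ext i j
    have h := congrArg (fun z : N => (z : Fin n → F) i)
      (b.sum_repr ⟨R *ᵥ (b j : Fin n → F), hR _ (b j).2⟩)
    simp only [Submodule.coe_sum, Submodule.coe_smul, Finset.sum_apply, Pi.smul_apply] at h
    rw [Matrix.mul_apply, Matrix.mul_apply]
    simp only [Matrix.of_apply, Matrix.map_apply, hB]
    rw [Matrix.mulVec, dotProduct] at h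
    rw [← h]
    refine Finset.sum_congr rfl fun k _ => ?_
    rw [Algebra.smul_def, mul_comm]

lemma aux_main (K : Type) [Field K] [NumberField K] (n : ℕ)
    (Γ : Type) [Group Γ] (ρ : Γ →* GL (Fin n) K) (D : 𝓞 K) (hD : D ≠ 0)
    (h : ∀ (γ : Γ) (i j : Fin n), ∃ z : 𝓞 K,
      algebraMap (𝓞 K) K z = algebraMap (𝓞 K) K D * (ρ γ : Matrix (Fin n) (Fin n) K) i j) :
    ∃ P : Matrix (Fin n) (Fin n) (AlgebraicClosure K), P.det ≠ 0 ∧ ∀ γ : Γ,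
      ∃ Q : Matrix (Fin n) (Fin n) (AlgebraicClosure K), (∀ i j, IsIntegral ℤ (Q i j)) ∧
        (ρ γ : Matrix (Fin n) (Fin n) K).map (algebraMap K (AlgebraicClosure K)) * P = P * Q := by
  classical
  let Ω := AlgebraicClosure K
  have : CharZero Ω := charZero_of_injective_algebraMap (algebraMap K Ω).injective
  have : Algebra.IsAlgebraic ℚ Ω := Algebra.IsAlgebraic.trans ℚ K Ω
  have : Algebra.IsAlgebraic ℤ Ω := (IsFractionRing.comap_isAlgebraic_iff (K := ℚ)).2 inferInstance
  let A := integralClosure ℤ Ω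
  have : IsBezout A := aux_bezout
  have : IsFractionRing A Ω := integralClosure.isFractionRing_of_algebraic
    (fun x hx => by simpa using hx)
  have hDK : algebraMap (𝓞 K) K D ≠ 0 := by simpa using hD
  let M : Submodule (𝓞 K) (Fin n → K) := Submodule.span (𝓞 K)
    (Set.range fun p : Γ × Fin n => (ρ p.1 : Matrix (Fin n) (Fin n) K) *ᵥ Pi.single p.2 1)
  have hMst : ∀ γ : Γ, ∀ x ∈ M, (ρ γ : Matrix (Fin n) (Fin n) K) *ᵥ x ∈ M := by
    intro γ x hx
    have : M ≤ M.comap ((Matrix.mulVecLin (ρ γ : Matrix (Fin n) (Fin n) K)).restrictScalars (𝓞 K)) := by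
      rw [Submodule.span_le]
      rintro _ ⟨⟨γ', i⟩, rfl⟩
      refine Submodule.subset_span ⟨(γ * γ', i), ?_⟩
      change ((ρ (γ * γ') : GL (Fin n) K) : Matrix (Fin n) (Fin n) K) *ᵥ _ =
        (ρ γ : Matrix (Fin n) (Fin n) K) *ᵥ ((ρ γ' : Matrix (Fin n) (Fin n) K) *ᵥ _)
      rw [map_mul, Units.val_mul, Matrix.mulVec_mulVec]
    exact this hx
  have hMfg : M.FG := by
    let T : (Fin n → 𝓞 K) →ₗ[𝓞 K] (Fin n → K) :=
      LinearMap.pi fun i => ((algebraMap (𝓞 K) K D)⁻¹ • (Algebra.linearMap (𝓞 K) K)).comp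
        (LinearMap.proj i)
    have hle : M ≤ LinearMap.range T := by
      rw [Submodule.span_le]
      rintro _ ⟨⟨γ, i⟩, rfl⟩
      choose z hz using fun k => h γ k i
      refine ⟨z, ?_⟩
      ext k
      simp only [T, LinearMap.pi_apply, LinearMap.comp_apply, LinearMap.smul_apply,
        LinearMap.proj_apply, Algebra.linearMap_apply, smul_eq_mul]
      rw [hz]
      simp [hDK]
    have : IsNoetherian (𝓞 K) M := isNoetherian_of_le hle
    exact Module.Finite.iff_fg.1 inferInstance
  let ι : (Fin n → K) → (Fin n → Ω) := fun x i => algebraMap K Ω (x i)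
  let N : Submodule A (Fin n → Ω) := Submodule.span A (ι '' M)
  have hOA : ∀ c : 𝓞 K, IsIntegral ℤ (algebraMap K Ω (algebraMap (𝓞 K) K c)) := fun c =>
    (RingOfIntegers.isIntegral_coe c).map (algebraMap K Ω).toIntAlgHom
  have hNfg : N.FG := by
    obtain ⟨s, hs⟩ := hMfg
    refine ⟨s.image ι, le_antisymm ?_ ?_⟩
    · apply Submodule.span_mono
      rw [Finset.coe_image]
      apply Set.image_mono
      intro x hx
      rw [SetLike.mem_coe, ← hs]
      exact Submodule.subset_span hx
    · rw [Submodule.span_le]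
      rintro _ ⟨x, hx, rfl⟩
      rw [SetLike.mem_coe, ← hs] at hx
      induction hx using Submodule.span_induction with
      | mem x hx => exact Submodule.subset_span (by simpa using ⟨x, hx, rfl⟩)
      | zero =>
        have : ι 0 = 0 := by ext; simp [ι]
        rw [this]; exact zero_mem _
      | add x y _ _ hx hy =>
        have : ι (x + y) = ι x + ι y := by ext; simp [ι]
        rw [this]; exact add_mem hx hy
      | smul c x _ hx =>
        have : ι (c • x) = (⟨_, hOA c⟩ : A) • ι x := by
          ext i
          simp [ι, Algebra.smul_def]
        rw [this]; exact Submodule.smul_mem _ _ hx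
  have hspan : Submodule.span Ω (N : Set (Fin n → Ω)) = ⊤ := by
    rw [eq_top_iff, ← (Pi.basisFun Ω (Fin n)).span_eq]
    apply Submodule.span_mono
    rintro _ ⟨i, rfl⟩
    refine Submodule.subset_span ⟨Pi.single i 1, Submodule.subset_span ⟨(1, i), by
      change ((ρ 1 : GL (Fin n) K) : Matrix (Fin n) (Fin n) K) *ᵥ _ = _
      rw [map_one, Units.val_one, Matrix.one_mulVec]⟩, ?_⟩
    ext j
    simp [ι, Pi.single_apply, apply_ite]
  obtain ⟨P, hP, H⟩ := aux_conj n N hNfg hspan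
  refine ⟨P, hP, fun γ => ?_⟩
  obtain ⟨Q, hQ⟩ := H ((ρ γ : Matrix (Fin n) (Fin n) K).map (algebraMap K Ω)) (by
    intro x hx
    have : N ≤ N.comap ((Matrix.mulVecLin ((ρ γ : Matrix (Fin n) (Fin n) K).map
        (algebraMap K Ω))).restrictScalars A) := by
      rw [Submodule.span_le]
      rintro _ ⟨x, hx, rfl⟩
      refine Submodule.subset_span ⟨(ρ γ : Matrix (Fin n) (Fin n) K) *ᵥ x, hMst γ x hx, ?_⟩
      ext i
      simp [ι, Matrix.mulVec, dotProduct]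
    exact this hx)
  exact ⟨_, fun i j => (Q i j).2, hQ⟩

lemma aux_descend (K : Type) [Field K] [NumberField K] (n : ℕ)
    (Γ : Type) [Group Γ] (ρ : Γ →* GL (Fin n) K)
    (h : ∃ P : Matrix (Fin n) (Fin n) (AlgebraicClosure K), P.det ≠ 0 ∧ ∀ γ : Γ,
      ∃ Q : Matrix (Fin n) (Fin n) (AlgebraicClosure K), (∀ i j, IsIntegral ℤ (Q i j)) ∧
        (ρ γ : Matrix (Fin n) (Fin n) K).map (algebraMap K (AlgebraicClosure K)) * P = P * Q) :
    ∃ (L : Type) (_ : Field L) (_ : NumberField L) (_ : Algebra K L),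
      FiniteDimensional K L ∧
      ∃ g : GL (Fin n) L, ∀ (γ : Γ) (i j : Fin n),
        IsIntegral ℤ
          (((g * Units.map (RingHom.mapMatrix (algebraMap K L)).toMonoidHom (ρ γ) * g⁻¹ :
              GL (Fin n) L) : Matrix (Fin n) (Fin n) L) i j) := by
  obtain ⟨P, hP, H⟩ := h
  let Ω := AlgebraicClosure K
  let L := IntermediateField.adjoin K (Set.range fun p : Fin n × Fin n => P p.1 p.2)
  have hfd : FiniteDimensional K L := IntermediateField.finiteDimensional_adjoin
    (fun z _ => (Algebra.IsAlgebraic.isAlgebraic z).isIntegral)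
  have hc : CharZero L := charZero_of_injective_algebraMap (algebraMap K L).injective
  have hL : NumberField L := { to_charZero := hc, to_finiteDimensional := Module.Finite.trans K L }
  let P' : Matrix (Fin n) (Fin n) L := Matrix.of fun i j =>
    ⟨P i j, IntermediateField.subset_adjoin _ _ ⟨(i, j), rfl⟩⟩
  have hPP : P'.map (algebraMap L Ω) = P := by ext i j; rfl
  have hdet : P'.det ≠ 0 := by
    intro h0
    apply hP
    rw [← hPP]
    have := RingHom.map_det (algebraMap L Ω) P'
    rw [h0, map_zero] at this
    exact this.symm
  let p : GL (Fin n) L := Matrix.GeneralLinearGroup.mkOfDetNeZero P' hdet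
  have hp : (p : Matrix (Fin n) (Fin n) L) = P' := rfl
  refine ⟨L, inferInstance, hL, inferInstance, hfd, p⁻¹, fun γ i j => ?_⟩
  obtain ⟨Q, hQ, e⟩ := H γ
  rw [← isIntegral_algebraMap_iff (algebraMap L Ω).injective]
  set r : GL (Fin n) L := Units.map (RingHom.mapMatrix (algebraMap K L)).toMonoidHom (ρ γ) with hr
  have hrΩ : (r : Matrix (Fin n) (Fin n) L).map (algebraMap L Ω) =
      (ρ γ : Matrix (Fin n) (Fin n) K).map (algebraMap K Ω) := by
    ext i j; rfl
  have key : ((p⁻¹ * r * p⁻¹⁻¹ : GL (Fin n) L) : Matrix (Fin n) (Fin n) L).map (algebraMap L Ω) = Q := by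
    have h1 : P * ((p⁻¹ * r * p⁻¹⁻¹ : GL (Fin n) L) : Matrix (Fin n) (Fin n) L).map (algebraMap L Ω)
        = P * Q := by
      rw [← e, ← hrΩ, ← hPP, ← hp, ← Matrix.map_mul, ← Matrix.map_mul, ← Units.val_mul,
        ← Units.val_mul]
      congr 2
      group
    have hu : IsUnit P := (Matrix.isUnit_iff_isUnit_det P).2 (isUnit_iff_ne_zero.2 hP)
    exact hu.mul_left_cancel h1
  have := congrFun (congrFun key i) j
  rw [Matrix.map_apply] at this
  rw [this]
  exact hQ i j

/-- local integrality criterion, `GL_n` case.  Let `K` be a number field,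
`S` a finite set of nonzero primes of `𝓞_K` (elements of the height-one spectrum), `Γ` a
finitely generated group and `ρ : Γ → GL_n(K)` a homomorphism whose matrix entries (and
those of the inverses) are `p`-integral for every nonzero prime `p ∉ S`.  If for each
`p ∈ S` the representation can be conjugated, over an algebraic closure of the completion
`K_p`, into matrices with entries integral over the valuation ring `𝓞_{K_p}`, then there
is a finite extension of number fields `L/K` over which `ρ` can be conjugated into
matrices with entries (and inverse entries) in `𝓞_L` (i.e. integral over `ℤ`). -/
theorem stmt_0 (K : Type) [Field K] [NumberField K] (n : ℕ)
    (S : Finset (HeightOneSpectrum (𝓞 K)))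
    (Γ : Type) [Group Γ] [Group.FG Γ] (ρ : Γ →* GL (Fin n) K)
    -- integrality away from `S`: every entry of `ρ(γ)` and `ρ(γ)⁻¹` lies in the
    -- localization of `𝓞_K` at `p`, i.e. can be written `a/b` with `b ∉ p`
    (hloc : ∀ v : HeightOneSpectrum (𝓞 K), v ∉ S → ∀ (γ : Γ) (i j : Fin n),
      (∃ a b : 𝓞 K, b ∉ v.asIdeal ∧
        (ρ γ : Matrix (Fin n) (Fin n) K) i j =
          algebraMap (𝓞 K) K a / algebraMap (𝓞 K) K b) ∧
      (∃ a b : 𝓞 K, b ∉ v.asIdeal ∧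
        ((ρ γ)⁻¹ : Matrix (Fin n) (Fin n) K) i j =
          algebraMap (𝓞 K) K a / algebraMap (𝓞 K) K b))
    -- integrality after conjugation at each `p ∈ S`, over an algebraic closure of the
    -- completion `K_p`: each entry of `g·ρ(γ)·g⁻¹` is a root of a monic polynomial with
    -- coefficients in the valuation ring `𝓞_{K_p}`
    (hS : ∀ v ∈ S,
      ∃ g : GL (Fin n) (AlgebraicClosure (v.adicCompletion K)),
        ∀ (γ : Γ) (i j : Fin n),
          ∃ P : Polynomial (v.adicCompletion K), P.Monic ∧
            (∀ k : ℕ, P.coeff k ∈ v.adicCompletionIntegers K) ∧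
            Polynomial.aeval
              (((g * Units.map (RingHom.mapMatrix
                    (algebraMap K (AlgebraicClosure (v.adicCompletion K)))).toMonoidHom
                      (ρ γ) * g⁻¹ :
                  GL (Fin n) (AlgebraicClosure (v.adicCompletion K))) :
                Matrix (Fin n) (Fin n) (AlgebraicClosure (v.adicCompletion K))) i j)
              P = 0) :
    ∃ (L : Type) (_ : Field L) (_ : NumberField L) (_ : Algebra K L),
      FiniteDimensional K L ∧
      ∃ g : GL (Fin n) L, ∀ (γ : Γ) (i j : Fin n),
        IsIntegral ℤ
          (((g * Units.map (RingHom.mapMatrix (algebraMap K L)).toMonoidHom (ρ γ) * g⁻¹ :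
              GL (Fin n) L) : Matrix (Fin n) (Fin n) L) i j) ∧
        IsIntegral ℤ
          ((((g * Units.map (RingHom.mapMatrix (algebraMap K L)).toMonoidHom (ρ γ) * g⁻¹)⁻¹ :
              GL (Fin n) L) : Matrix (Fin n) (Fin n) L) i j) := by
  obtain ⟨D, hD, hDz⟩ := aux_global K n S Γ ρ (fun v hv γ i j => (hloc v hv γ i j).1)
    (fun v hv => aux_place K n v Γ ρ (hS v hv))
  obtain ⟨L, i1, i2, i3, hfd, g, hg⟩ := aux_descend K n Γ ρ (aux_main K n Γ ρ D hD hDz)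
  refine ⟨L, i1, i2, i3, hfd, g, fun γ i j => ⟨hg γ i j, ?_⟩⟩
  have e : (g * Units.map (RingHom.mapMatrix (algebraMap K L)).toMonoidHom (ρ γ) * g⁻¹)⁻¹ =
      g * Units.map (RingHom.mapMatrix (algebraMap K L)).toMonoidHom (ρ γ⁻¹) * g⁻¹ := by
    rw [map_inv ρ, map_inv]
    group
  rw [e]
  exact hg γ⁻¹ i j
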